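/- arXiv:2006.06757 — 2 statements merged into one kernel-verified Lean document; each statement's English description precedes it below -/
import Mathlib

section
/- Let A be a ring and let R = A((x)) be its Laurent series ring. If every cyclic right R-module is quotient finite-dimensional, then both R and A are right Noetherian rings. -/
universe u

/-- A module is *finite-dimensional* (in the sense of Goldie/uniform dimension) if it
does not contain an infinite direct sum of nonzero submodules, i.e. every independent
family of nonzero submodules is finite. -/
def IsFinDimModule (R M : Type*) [Ring R] [AddCommGroup M] [Module R M] : Prop :=
  ∀ (ι : Type) (N : ι → Submodule R M), iSupIndep N → (∀ i, N i ≠ ⊥) → Finite ι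

/-- A module is *quotient finite-dimensional* if every quotient module of it is
finite-dimensional. -/
def IsQFDModule (R M : Type*) [Ring R] [AddCommGroup M] [Module R M] : Prop :=
  ∀ N : Submodule R M, IsFinDimModule R (M ⧸ N)

/-!
Suppose no term of `a : ℕ → A` lies in the right ideal `I n` generated by its predecessors. Split
`ℕ` into infinitely many infinite sets `S i` and put `f i = ∑ a n x ^ (n ^ 2)`, summed over
`n ∈ S i`. As the gaps between consecutive squares tend to infinity, for `n` large the coefficient
of `x ^ (n ^ 2 + j)` in `∑ f i * q i` is, modulo `I n`, the coefficient of `x ^ j` in `a n * q i`,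
where `S i` is the set containing `n`. Hence a relation `∑ f i * q i = 0` forces every `q i` into
the proper right ideal `G i` of series whose coefficients `c` satisfy `a n * c ∈ I n` for all but
finitely many `n ∈ S i`. So the quotient of `R` by `∑ f i * G i` contains the infinite direct sum
of the nonzero modules `R / G i`, and `R` is not quotient finite-dimensional.

Once `A` is right Noetherian, so is `R`: a right ideal of `R` is generated by the power series in
it, and finitely many of these whose constant coefficients generate all the constant coefficients
occurring suffice, by successive approximation.
-/

open Filter MulOpposite PowerSeries

section UniformDimension

variable {R M : Type*} [Ring R] [AddCommGroup M] [Module R M] {ι : Type}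

theorem IsFinDimModule.finite_of_linearCombination (hM : IsFinDimModule R M) {w : ι → M}
    (hw₀ : ∀ i, w i ≠ 0)
    (hw : ∀ g : ι →₀ R, Finsupp.linearCombination R w g = 0 → ∀ i, g i • w i = 0) :
    Finite ι := by
  refine hM ι (fun i => R ∙ w i) ?_ fun i => by simpa using hw₀ i
  rw [iSupIndep_iff_finsetSum_eq_zero_imp_eq_zero]
  intro s x hx hsum i hi
  choose! c hc using fun i hi => Submodule.mem_span_singleton.1 (hx i hi)
  have hg : Finsupp.linearCombination R w (Finsupp.indicator s fun i _ => c i) = 0 := by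
    rw [← hsum, Finsupp.indicator_eq_sum_single, map_sum]
    exact Finset.sum_congr rfl fun i hi => by simp [hc i hi]
  simpa [Finsupp.indicator_of_mem hi, hc i hi] using hw _ hg i

theorem IsQFDModule.finite_of_linearCombination (hM : IsQFDModule R M) {v : ι → M}
    {G : ι → Ideal R} (hG : ∀ i, G i ≠ ⊤)
    (hv : ∀ g : ι →₀ R, Finsupp.linearCombination R v g = 0 → ∀ i, g i ∈ G i) : Finite ι := by
  let N := (Finsupp.submodule G).map (Finsupp.linearCombination R v)
  have mem_N (g : ι →₀ R) : Finsupp.linearCombination R v g ∈ N ↔ ∀ i, g i ∈ G i := by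
    refine ⟨?_, fun hg => ⟨g, hg, rfl⟩⟩
    rintro ⟨g', hg', heq⟩ i
    have hsub : (g - g') i ∈ G i := hv _ (by rw [map_sub, heq, sub_self]) i
    simpa using (G i).add_mem hsub (hg' i)
  have smul_mem_N (i : ι) (r : R) : r • v i ∈ N ↔ r ∈ G i := by
    rw [← Finsupp.linearCombination_single, mem_N]
    refine ⟨fun h => by simpa using h i, fun hr k => ?_⟩
    obtain rfl | hik := eq_or_ne i k
    · simpa using hr
    · simp [Finsupp.single_eq_of_ne hik.symm]
  refine (hM N).finite_of_linearCombination (w := N.mkQ ∘ v) (fun i hi => ?_) fun g hg i => ?_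
  · refine hG i ((Ideal.eq_top_iff_one _).2 ((smul_mem_N i 1).1 ?_))
    rwa [one_smul, ← Submodule.Quotient.mk_eq_zero]
  · rw [← Finsupp.apply_linearCombination, Submodule.mkQ_apply, Submodule.Quotient.mk_eq_zero,
      mem_N] at hg
    rw [Function.comp_apply, ← map_smul, Submodule.mkQ_apply, Submodule.Quotient.mk_eq_zero]
    exact (smul_mem_N i _).2 (hg i)

end UniformDimension

theorem isNoetherian_of_forall_exists_mem_span_image_Iio {R M : Type*} [Semiring R]
    [AddCommMonoid M] [Module R M]
    (h : ∀ a : ℕ → M, ∃ n, a n ∈ Submodule.span R (a '' Set.Iio n)) : IsNoetherian R M := by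
  rw [isNoetherian_iff, RelEmbedding.wellFounded_iff_isEmpty]
  refine ⟨fun N => ?_⟩
  have hN : StrictMono N := fun m n hmn => N.map_rel_iff.2 hmn
  choose a ha ha' using fun n => SetLike.exists_of_lt (hN (Nat.lt_succ_self n))
  obtain ⟨n, hn⟩ := h a
  refine ha' n (Submodule.span_le.2 ?_ hn)
  rintro _ ⟨m, hm, rfl⟩
  exact hN.monotone (Nat.succ_le_of_lt hm) (ha m)

section LacunarySeries

theorem hahnSeries_coeff_mul_eq_sum {Γ R : Type*} [AddCommGroup Γ] [PartialOrder Γ]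
    [IsOrderedAddMonoid Γ] [NonUnitalNonAssocSemiring R] (f g : HahnSeries Γ R) {k : Γ}
    {s : Finset Γ} (hs : ∀ t ∉ s, f.coeff t * g.coeff (k - t) = 0) :
    (f * g).coeff k = ∑ t ∈ s, f.coeff t * g.coeff (k - t) := by
  rw [HahnSeries.coeff_mul]
  have hsnd {x : Γ × Γ} (hx : x ∈ Finset.antidiagonal f.isPWO_support g.isPWO_support k) :
      x.2 = k - x.1 :=
    eq_sub_of_add_eq' (Finset.mem_antidiagonal.1 hx).2.2
  refine Finset.sum_bij_ne_zero (fun x _ _ => x.1) ?_ ?_ ?_ ?_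
  · intro x hx hne
    by_contra hxs
    exact hne (hsnd hx ▸ hs x.1 hxs)
  · intro x hx _ y hy _ hxy
    exact Prod.ext hxy (by rw [hsnd hx, hsnd hy, hxy])
  · intro t _ hne
    refine ⟨(t, k - t), Finset.mem_antidiagonal.2 ⟨?_, ?_, add_sub_cancel t k⟩, hne, rfl⟩
    · exact left_ne_zero_of_mul hne
    · exact right_ne_zero_of_mul hne
  · intro x hx _
    rw [hsnd hx]

theorem strictMono_natCast_sq : StrictMono fun n : ℕ => (n : ℤ) ^ 2 := fun m n hmn => by
  simp only
  gcongr

section Semiring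

variable {A : Type*} [Semiring A]

/-- The series `∑ b n x ^ (n ^ 2)`, a Laurent series with prescribed coefficients and gaps tending
to infinity. -/
noncomputable def lacunarySeries (b : ℕ → A) : LaurentSeries A :=
  HahnSeries.embDomain
    (OrderEmbedding.ofStrictMono (fun n : ℕ => (n : ℤ) ^ 2) strictMono_natCast_sq)
    ⟨b, .of_linearOrder _⟩

theorem coeff_lacunarySeries_sq (b : ℕ → A) (n : ℕ) :
    (lacunarySeries b).coeff ((n : ℤ) ^ 2) = b n :=
  HahnSeries.embDomain_coeff

theorem coeff_lacunarySeries_of_notMem_range (b : ℕ → A) {t : ℤ}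
    (ht : ∀ n : ℕ, (n : ℤ) ^ 2 ≠ t) : (lacunarySeries b).coeff t = 0 :=
  HahnSeries.embDomain_of_notMem_range (by rintro ⟨n, hn⟩; exact ht n hn)

theorem eventually_coeff_lacunarySeries_mul_eq_sum (b : ℕ → A) (q : LaurentSeries A) (j : ℤ) :
    ∀ᶠ n : ℕ in atTop, (lacunarySeries b * q).coeff ((n : ℤ) ^ 2 + j) =
      ∑ m ∈ Finset.range (n + 1), b m * q.coeff ((n : ℤ) ^ 2 + j - (m : ℤ) ^ 2) := by
  filter_upwards [eventually_ge_atTop (j - q.order).toNat] with n hn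
  have hsq : Function.Injective fun m : ℕ => (m : ℤ) ^ 2 :=
    strictMono_natCast_sq.injective
  rw [hahnSeries_coeff_mul_eq_sum (s := (Finset.range (n + 1)).image fun m : ℕ => (m : ℤ) ^ 2),
    Finset.sum_image hsq.injOn]
  · simp only [coeff_lacunarySeries_sq]
  intro t ht
  by_cases htsq : ∃ m : ℕ, (m : ℤ) ^ 2 = t
  · obtain ⟨m, rfl⟩ := htsq
    have hnm : (n : ℤ) + 1 ≤ m := by
      by_contra! hmn
      exact ht (Finset.mem_image_of_mem _ (Finset.mem_range.2 (by exact_mod_cast hmn)))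
    rw [q.coeff_eq_zero_of_lt_order, mul_zero]
    have hj : j - q.order ≤ n := Int.toNat_le.1 hn
    nlinarith
  · rw [coeff_lacunarySeries_of_notMem_range b (not_exists.1 htsq), zero_mul]

/-- The series `q` such that, for every coefficient `c` of `q`, eventually `a n * c ∈ I n`: the
limit along `l` of the colon right ideals `(I n : a n)`. Right ideals of `A((x))` are encoded as
left ideals of the opposite ring. -/
def eventualColon {α : Type*} (l : Filter α) (a : α → A) (I : α → Submodule Aᵐᵒᵖ A) :
    Ideal (LaurentSeries A)ᵐᵒᵖ where
  carrier := {q | ∀ j : ℤ, ∀ᶠ n in l, a n * q.unop.coeff j ∈ I n}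
  zero_mem' j := by simp
  add_mem' hp hq j := by
    filter_upwards [hp j, hq j] with n hpn hqn
    simpa [mul_add] using (I n).add_mem hpn hqn
  smul_mem' r q hq j := by
    have hcoeff : ∀ᶠ n in l, ∀ x ∈ Finset.antidiagonal q.unop.isPWO_support r.unop.isPWO_support j,
        a n * q.unop.coeff x.1 ∈ I n :=
      (eventually_all_finset _).2 fun x _ => hq x.1
    filter_upwards [hcoeff] with n hn
    rw [smul_eq_mul, unop_mul, HahnSeries.coeff_mul, Finset.mul_sum]
    refine (I n).sum_mem fun x hx => ?_
    rw [← mul_assoc]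
    exact (I n).smul_mem (op (r.unop.coeff x.2)) (hn x hx)

theorem eventualColon_ne_top {α : Type*} {l : Filter α} {a : α → A} {I : α → Submodule Aᵐᵒᵖ A}
    (h : ∃ᶠ n in l, a n ∉ I n) : eventualColon l a I ≠ ⊤ := by
  rw [Ideal.ne_top_iff_one]
  intro h₁
  exact h (by simpa using h₁ 0)

end Semiring

variable {A : Type*} [Ring A]

theorem eventually_coeff_lacunarySeries_mul_sub_mem {b : ℕ → A} {I : ℕ → Submodule Aᵐᵒᵖ A}
    (hbI : ∀ n, ∀ m < n, b m ∈ I n) (q : LaurentSeries A) (j : ℤ) :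
    ∀ᶠ n : ℕ in atTop,
      (lacunarySeries b * q).coeff ((n : ℤ) ^ 2 + j) - b n * q.coeff j ∈ I n := by
  filter_upwards [eventually_coeff_lacunarySeries_mul_eq_sum b q j] with n hn
  rw [hn, Finset.sum_range_succ, add_sub_cancel_left, add_sub_cancel_right]
  exact (I n).sum_mem fun m hm => (I n).smul_mem (op _) (hbI n m (Finset.mem_range.1 hm))

theorem mem_eventualColon_of_linearCombination_eq_zero {ι : Type*} {a : ℕ → A}
    {I : ℕ → Submodule Aᵐᵒᵖ A} (haI : ∀ n, ∀ m < n, a m ∈ I n) (p : ℕ → ι)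
    {g : ι →₀ (LaurentSeries A)ᵐᵒᵖ}
    (hg : Finsupp.linearCombination (LaurentSeries A)ᵐᵒᵖ
      (fun i => lacunarySeries ((p ⁻¹' {i}).indicator a)) g = 0) (i : ι) :
    g i ∈ eventualColon (atTop ⊓ 𝓟 (p ⁻¹' {i})) a I := by
  intro j
  rw [eventually_inf_principal]
  have hbI (l : ι) (n m : ℕ) (hmn : m < n) : (p ⁻¹' {l}).indicator a m ∈ I n :=
    Set.indicator_rel_indicator (r := fun x _ => x ∈ I n) (g := a) (I n).zero_mem
      fun _ => haI n m hmn
  have hterm : ∀ᶠ n : ℕ in atTop, ∀ l ∈ g.support,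
      (lacunarySeries ((p ⁻¹' {l}).indicator a) * (g l).unop).coeff ((n : ℤ) ^ 2 + j) -
        (p ⁻¹' {l}).indicator a n * (g l).unop.coeff j ∈ I n :=
    (eventually_all_finset _).2 fun l _ => eventually_coeff_lacunarySeries_mul_sub_mem (hbI l) _ j
  filter_upwards [hterm] with n hn hni
  have hsum := (I n).sum_mem hn
  have hcoeff : ∑ l ∈ g.support,
      (lacunarySeries ((p ⁻¹' {l}).indicator a) * (g l).unop).coeff ((n : ℤ) ^ 2 + j) = 0 := by
    simpa [Finsupp.linearCombination_apply, Finsupp.sum] using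
      congrArg (fun y : LaurentSeries A => y.coeff ((n : ℤ) ^ 2 + j)) hg
  have hsingle : ∑ l ∈ g.support, (p ⁻¹' {l}).indicator a n * (g l).unop.coeff j =
      a n * (g i).unop.coeff j := by
    obtain rfl : p n = i := hni
    rw [Finset.sum_eq_single (p n)]
    · simp
    · intro l _ hl
      simp [hl.symm]
    · intro h
      simp [Finsupp.notMem_support_iff.1 h]
  rwa [Finset.sum_sub_distrib, hcoeff, hsingle, zero_sub, Submodule.neg_mem_iff] at hsum

theorem isNoetherian_of_isQFDModule_laurentSeries
    (h : IsQFDModule (LaurentSeries A)ᵐᵒᵖ (LaurentSeries A)) : IsNoetherian Aᵐᵒᵖ A := by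
  refine isNoetherian_of_forall_exists_mem_span_image_Iio fun a => ?_
  by_contra! ha
  let p (n : ℕ) : ℕ := n.unpair.1
  have hp (i : ℕ) : (p ⁻¹' {i}).Infinite :=
    Set.infinite_of_injective_forall_mem (f := Nat.pair i)
      (fun m n hmn => (Nat.pair_eq_pair.1 hmn).2) fun n => by simp [p]
  have hG (i : ℕ) : eventualColon (atTop ⊓ 𝓟 (p ⁻¹' {i})) a
      (fun n => Submodule.span Aᵐᵒᵖ (a '' Set.Iio n)) ≠ ⊤ :=
    eventualColon_ne_top <| frequently_inf_principal.2 <|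
      (Nat.frequently_atTop_iff_infinite.2 (hp i)).mono fun n hn => ⟨hn, ha n⟩
  have : Finite ℕ := h.finite_of_linearCombination hG fun g hg =>
    mem_eventualColon_of_linearCombination_eq_zero
      (fun n m hmn => Submodule.subset_span (Set.mem_image_of_mem a hmn)) p hg
  exact not_finite ℕ

end LacunarySeries

section Localization

/-- The contraction of a right ideal of `S` along a ring homomorphism `φ : R →+* S`. -/
def rightIdealComap {R S : Type*} [Semiring R] [Semiring S] (φ : R →+* S)
    (J : Submodule Sᵐᵒᵖ S) : Submodule Rᵐᵒᵖ R where
  carrier := φ ⁻¹' J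
  zero_mem' := by simp
  add_mem' hx hy := by simpa using J.add_mem hx hy
  smul_mem' r x hx := by simpa using J.smul_mem (op (φ r.unop)) hx

theorem mem_rightIdealComap {R S : Type*} [Semiring R] [Semiring S] {φ : R →+* S}
    {J : Submodule Sᵐᵒᵖ S} {x : R} : x ∈ rightIdealComap φ J ↔ φ x ∈ J :=
  Iff.rfl

variable {A : Type*} [Semiring A]

theorem ofPowerSeries_powerSeriesPart_eq_mul_single (f : LaurentSeries A) :
    HahnSeries.ofPowerSeries ℤ A f.powerSeriesPart = f * HahnSeries.single (-f.order) 1 := by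
  rw [LaurentSeries.ofPowerSeries_powerSeriesPart]
  ext t
  simp [HahnSeries.coeff_single_mul, HahnSeries.coeff_mul_single]

theorem mem_rightIdealComap_ofPowerSeries_of_mul_X_mem
    {J : Submodule (LaurentSeries A)ᵐᵒᵖ (LaurentSeries A)} (f : A⟦X⟧)
    (hf : f * X ∈ rightIdealComap (HahnSeries.ofPowerSeries ℤ A) J) :
    f ∈ rightIdealComap (HahnSeries.ofPowerSeries ℤ A) J := by
  rw [mem_rightIdealComap] at hf ⊢
  simpa [mul_assoc] using J.smul_mem (op (HahnSeries.single (-1) 1)) hf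

theorem span_image_ofPowerSeries_eq {J : Submodule (LaurentSeries A)ᵐᵒᵖ (LaurentSeries A)}
    {s : Set A⟦X⟧}
    (hs : Submodule.span A⟦X⟧ᵐᵒᵖ s = rightIdealComap (HahnSeries.ofPowerSeries ℤ A) J) :
    Submodule.span (LaurentSeries A)ᵐᵒᵖ (HahnSeries.ofPowerSeries ℤ A '' s) = J := by
  set φ := HahnSeries.ofPowerSeries ℤ A
  refine le_antisymm (Submodule.span_le.2 ?_) fun (f : LaurentSeries A) hf => ?_
  · exact Set.image_subset_iff.2 (Submodule.span_le.1 hs.le)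
  have hpart : φ f.powerSeriesPart = f * HahnSeries.single (-f.order) 1 :=
    ofPowerSeries_powerSeriesPart_eq_mul_single f
  have hpart_mem : f.powerSeriesPart ∈ Submodule.span A⟦X⟧ᵐᵒᵖ s := by
    rw [hs, mem_rightIdealComap, hpart]
    exact J.smul_mem (op _) hf
  have hle : Submodule.span A⟦X⟧ᵐᵒᵖ s ≤
      rightIdealComap φ (Submodule.span (LaurentSeries A)ᵐᵒᵖ (φ '' s)) :=
    Submodule.span_le.2 fun g hg => Submodule.subset_span (Set.mem_image_of_mem φ hg)
  have hf_eq : φ f.powerSeriesPart * HahnSeries.single f.order 1 = f := by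
    simp [hpart, mul_assoc]
  rw [← hf_eq]
  exact Submodule.smul_mem _ (op _) (hle hpart_mem)

end Localization

section HilbertBasis

theorem eq_zero_of_eq_comp_mul_X {α A : Type*} [Semiring A] {D : α → A⟦X⟧} {next : α → α}
    (hD : ∀ y, D y = D (next y) * X) (y : α) : D y = 0 := by
  ext n
  induction n generalizing y with
  | zero => rw [hD, coeff_zero_mul_X, map_zero]
  | succ n ih => rw [hD, coeff_succ_mul_X, ih, map_zero, map_zero]

variable {A : Type*} [Ring A] {J : Submodule A⟦X⟧ᵐᵒᵖ A⟦X⟧} {ι : Type*} {F : ι → A⟦X⟧}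

theorem exists_eq_sum_mul_C_add_mul_X [Fintype ι] (hJ : ∀ f, f * X ∈ J → f ∈ J) (hFJ : ∀ i, F i ∈ J)
    {f : A⟦X⟧} (hf : f ∈ J)
    (hfF : constantCoeff f ∈ Submodule.span Aᵐᵒᵖ (Set.range fun i => constantCoeff (F i))) :
    ∃ c : ι → A, ∃ f' ∈ J, f = ∑ i, F i * C (c i) + f' * X := by
  obtain ⟨c, hc⟩ := (Submodule.mem_span_range_iff_exists_fun _).1 hfF
  let r := f - ∑ i, F i * C (c i).unop
  have hrJ : r ∈ J := J.sub_mem hf (J.sum_mem fun i _ => J.smul_mem (op _) (hFJ i))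
  have hr₀ : constantCoeff r = 0 := by simpa [r, sub_eq_zero] using hc.symm
  have hr : r = PowerSeries.mk (fun n => coeff (n + 1) r) * X := by
    simpa [hr₀] using eq_shift_mul_X_add_const r
  exact ⟨fun i => (c i).unop, _, hJ _ (hr ▸ hrJ), by rw [← hr, add_sub_cancel]⟩

theorem span_range_eq_of_constantCoeff_mem_span [Finite ι] (hJ : ∀ f, f * X ∈ J → f ∈ J)
    (hFJ : ∀ i, F i ∈ J)
    (hF : ∀ f ∈ J,
      constantCoeff f ∈ Submodule.span Aᵐᵒᵖ (Set.range fun i => constantCoeff (F i))) :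
    Submodule.span A⟦X⟧ᵐᵒᵖ (Set.range F) = J := by
  have := Fintype.ofFinite ι
  refine le_antisymm (Submodule.span_le.2 (Set.range_subset_iff.2 hFJ)) fun f hf => ?_
  choose c next hnextJ hnext using fun f : J =>
    exists_eq_sum_mul_C_add_mul_X hJ hFJ f.2 (hF f f.2)
  let step (f : J) : J := ⟨next f, hnextJ f⟩
  let H (f : J) (i : ι) : A⟦X⟧ := PowerSeries.mk fun n => c (step^[n] f) i
  have hH (f : J) (i : ι) : H f i = C (c f i) + H (step f) i * X := by
    rw [eq_shift_mul_X_add_const (H f i), add_comm]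
    simp [H]
  have herror (f : J) : (f : A⟦X⟧) - ∑ i, F i * H f i =
      ((step f : A⟦X⟧) - ∑ i, F i * H (step f) i) * X := by
    simp only [hH f, mul_add, ← mul_assoc, Finset.sum_add_distrib, sub_mul, Finset.sum_mul]
    nth_rw 1 [hnext f]
    simp only [step]
    abel
  have hf_eq : f = ∑ i, F i * H ⟨f, hf⟩ i :=
    sub_eq_zero.1 (eq_zero_of_eq_comp_mul_X herror ⟨f, hf⟩)
  rw [hf_eq]
  exact Submodule.sum_mem _ fun i _ =>
    Submodule.smul_mem _ (op _) (Submodule.subset_span (Set.mem_range_self i))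

theorem fg_of_forall_mem_of_mul_X_mem [IsNoetherian Aᵐᵒᵖ A] (hJ : ∀ f, f * X ∈ J → f ∈ J) :
    J.FG := by
  classical
  obtain ⟨t, htJ, ht⟩ := (Submodule.fg_span_iff_fg_span_finset_subset _).1
    (IsNoetherian.noetherian (Submodule.span Aᵐᵒᵖ (constantCoeff '' (J : Set A⟦X⟧))))
  obtain ⟨s, hsJ, rfl⟩ := Finset.subset_set_image_iff.1 htJ
  have hrange : Set.range (fun g : s => constantCoeff (g : A⟦X⟧)) = s.image constantCoeff := by
    ext
    simp
  rw [← span_range_eq_of_constantCoeff_mem_span hJ (F := fun g : s => (g : A⟦X⟧))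
    (fun g => hsJ g.2) fun f hf => ?_]
  · exact Submodule.fg_span (Set.finite_range _)
  · rw [hrange, ← ht]
    exact Submodule.subset_span (Set.mem_image_of_mem _ hf)

theorem isNoetherian_laurentSeries [IsNoetherian Aᵐᵒᵖ A] :
    IsNoetherian (LaurentSeries A)ᵐᵒᵖ (LaurentSeries A) := by
  refine ⟨fun J => ?_⟩
  obtain ⟨s, hs⟩ := fg_of_forall_mem_of_mul_X_mem
    (mem_rightIdealComap_ofPowerSeries_of_mul_X_mem (J := J))
  rw [← span_image_ofPowerSeries_eq hs]
  exact Submodule.fg_span (s.finite_toSet.image _)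

end HilbertBasis

/-- Let `R = A((x))` be the Laurent series ring over `A`. If every cyclic right
`R`-module is quotient finite-dimensional, then `R` and `A` are right Noetherian. -/
theorem stmt9 (A : Type u) [Ring A]
    (h : ∀ (M : Type u) [AddCommGroup M] [Module (LaurentSeries A)ᵐᵒᵖ M],
      (∃ m : M, Submodule.span (LaurentSeries A)ᵐᵒᵖ {m} = ⊤) →
        IsQFDModule (LaurentSeries A)ᵐᵒᵖ M) :
    IsNoetherian (LaurentSeries A)ᵐᵒᵖ (LaurentSeries A) ∧ IsNoetherian Aᵐᵒᵖ A := by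
  have hspan : Submodule.span (LaurentSeries A)ᵐᵒᵖ {(1 : LaurentSeries A)} = ⊤ :=
    Submodule.eq_top_iff'.2 fun f => Submodule.mem_span_singleton.2 ⟨op f, one_mul f⟩
  have hA : IsNoetherian Aᵐᵒᵖ A :=
    isNoetherian_of_isQFDModule_laurentSeries (h (LaurentSeries A) ⟨1, hspan⟩)
  exact ⟨isNoetherian_laurentSeries, hA⟩
end

section
/- Let A be a ring and let R = A((x)) be its Laurent series ring. If R is a semilocal ring and every cyclic right R-module is quotient finite-dimensional, then both R and A are right Artinian rings. -/
universe u

/-- A ring `R` is *semilocal* if `R` modulo its Jacobson radical is a semisimple ring. -/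
def IsSemilocalRing (R : Type*) [Ring R] : Prop :=
  IsSemisimpleModule R (R ⧸ Ideal.jacobson (⊥ : Ideal R))

/-!
Passing to opposite rings turns right modules over `A((x))` into left modules over `Aᵐᵒᵖ((x))`, so
one may argue with left ideals. Write `R = A((x))` and `J` for its Jacobson radical.

If `R` is semilocal and quotient finite-dimensional, then `N / JN` is finitely generated for every
left ideal `N`; by Nakayama, some member of any infinite family in `R` lies in the left ideal
generated by the others. Applied to the series `∑ aₙ x ^ (n ^ 2)`, with `n` running over the members
of a partition of `ℕ` into infinite sets and `aₙ ∈ Iₙ₊₁ \ Iₙ`, this rules out strictly ascending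
chains of left ideals `Iₙ`: multiplying by a fixed Laurent series cannot bring an exponent `m ^ 2`
to `n ^ 2` for `m > n` when `n` is large. Hence `A` is left Noetherian.

Semilocality also makes `a - x ^ n` a unit of `R` for some `n ≥ 1`, and comparing coefficients with
its inverse gives `a ^ k = a ^ (k + 1) * b`. If `a` is the leading coefficient of an element of `J`,
then `1 - a * b` is a unit modulo `J`, so `a ^ k = 0`. By Levitzki's theorem the ideal `P` of these
leading coefficients is nilpotent; then so is `P((x))`, which forces `P((x)) ≤ J`, and subtracting
initial parts gives `J = P((x))`. Thus `R` is semiprimary, hence Noetherian by Nakayama again, and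
Artinian by Hopkins–Levitzki. Finally `P ↦ P((x))` embeds the left ideals of `A` in those of `R`.
-/

section Nakayama

variable {R M : Type*} [Ring R] [AddCommGroup M] [Module R M] {I : Ideal R} {N P : Submodule R M}

theorem map_mkQ_le_smul_of_le_sup_smul (h : N ≤ P ⊔ I • N) :
    N.map P.mkQ ≤ I • N.map P.mkQ := by
  simpa only [Submodule.map_sup, Submodule.mkQ_map_self, bot_sup_eq, Submodule.map_smul'']
    using Submodule.map_mono (f := P.mkQ) h

theorem le_of_le_sup_jacobson_smul (hN : N.FG) (h : N ≤ P ⊔ Ring.jacobson R • N) : N ≤ P := by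
  rw [← P.ker_mkQ, LinearMap.le_ker_iff_map]
  exact (hN.map P.mkQ).eq_bot_of_le_jacobson_smul (map_mkQ_le_smul_of_le_sup_smul h)

theorem le_pow_smul_of_le_smul (h : N ≤ I • N) (n : ℕ) : N ≤ I ^ n • N := by
  induction n with
  | zero => simp [Submodule.pow_zero, Ideal.one_eq_top]
  | succ n ih =>
    rw [Submodule.pow_succ, Submodule.mul_smul]
    exact ih.trans (Submodule.smul_mono le_rfl h)

theorem le_of_le_sup_smul_of_isNilpotent (hI : IsNilpotent I) (h : N ≤ P ⊔ I • N) : N ≤ P := by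
  obtain ⟨n, hn⟩ := hI
  rw [← P.ker_mkQ, LinearMap.le_ker_iff_map, eq_bot_iff]
  simpa [hn] using le_pow_smul_of_le_smul (map_mkQ_le_smul_of_le_sup_smul h) n

theorem le_jacobson_of_isNilpotent (hI : IsNilpotent I) : I ≤ Ring.jacobson R := by
  rw [Ring.jacobson_eq_sInf_isMaximal]
  refine le_sInf fun m (hm : m.IsMaximal) ↦ ?_
  by_contra hIm
  have hsup : m ⊔ I = ⊤ := hm.1.2 _ (left_lt_sup.mpr hIm)
  have hle : I ≤ I • (⊤ : Ideal R) := fun x hx ↦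
    mul_one x ▸ Submodule.smul_mem_smul hx Submodule.mem_top
  exact hm.ne_top <| top_le_iff.mp <|
    le_of_le_sup_smul_of_isNilpotent hI (hsup ▸ sup_le_sup_left hle m)

end Nakayama

section Jacobson

variable {R : Type*} [Ring R]

theorem exists_mul_one_add_eq_one {r : R} (hr : r ∈ Ring.jacobson R) : ∃ s, s * (1 + r) = 1 := by
  rw [← Ideal.jacobson_bot] at hr
  obtain ⟨s, hs⟩ := Ideal.exists_mul_add_sub_mem_of_mem_jacobson r hr
  exact ⟨s, by rwa [Submodule.mem_bot, sub_eq_zero, add_comm r] at hs⟩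

theorem isUnit_one_add_of_mem_jacobson {r : R} (hr : r ∈ Ring.jacobson R) : IsUnit (1 + r) := by
  obtain ⟨s, hs⟩ := exists_mul_one_add_eq_one hr
  have hs' : 1 + -(s * r) = s := by
    rw [← sub_eq_add_neg, sub_eq_iff_eq_add, ← hs, mul_one_add]
  obtain ⟨t, ht⟩ := exists_mul_one_add_eq_one (neg_mem (Ideal.mul_mem_left _ s hr))
  rw [hs'] at ht
  exact isUnit_iff_exists_and_exists.mpr ⟨⟨s, left_inv_eq_right_inv ht hs ▸ ht⟩, ⟨s, hs⟩⟩

theorem mem_jacobson_of_forall_isUnit_one_add_mul {r : R} (hr : ∀ s, IsUnit (1 + s * r)) :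
    r ∈ Ring.jacobson R := by
  rw [← Ideal.jacobson_bot, Ideal.mem_jacobson_iff]
  intro s
  obtain ⟨t, ht⟩ := (hr s).exists_left_inv
  refine ⟨t, ?_⟩
  rw [Submodule.mem_bot, sub_eq_zero, ← ht]
  noncomm_ring

instance isLocalHom_mk_jacobson : IsLocalHom (Ideal.Quotient.mk (Ring.jacobson R)) where
  map_nonunit r hr := by
    have isUnit_of_mk_eq_one {t : R} (ht : Ideal.Quotient.mk (Ring.jacobson R) t = 1) :
        IsUnit t := by
      have : t - 1 ∈ Ring.jacobson R := Ideal.Quotient.eq_zero_iff_mem.mp (by simp [ht])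
      simpa using isUnit_one_add_of_mem_jacobson this
    obtain ⟨q, hrq, hqr⟩ := isUnit_iff_exists.mp hr
    obtain ⟨s, rfl⟩ := Ideal.Quotient.mk_surjective q
    obtain ⟨t, ht⟩ := (isUnit_of_mk_eq_one (t := r * s) (by rwa [map_mul])).exists_right_inv
    obtain ⟨t', ht'⟩ := (isUnit_of_mk_eq_one (t := s * r) (by rwa [map_mul])).exists_left_inv
    exact isUnit_iff_exists_and_exists.mpr
      ⟨⟨s * t, by rwa [← mul_assoc]⟩, ⟨t' * s, by rwa [mul_assoc]⟩⟩

theorem isSemisimpleRing_quotient_jacobson_of_surjective {Q : Type*} [Ring Q] [IsSemisimpleRing Q]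
    (p : R →+* Q) [IsLocalHom p] (hp : Function.Surjective p) :
    IsSemisimpleRing (R ⧸ Ring.jacobson R) := by
  have hker : RingHom.ker p = Ring.jacobson R := by
    apply le_antisymm
    · intro r hr
      refine mem_jacobson_of_forall_isUnit_one_add_mul fun s ↦ isUnit_of_map_unit p _ ?_
      simp [RingHom.mem_ker.mp hr]
    · have : RingHomSurjective p := ⟨hp⟩
      have hle := Ring.le_comap_jacobson p
      rwa [IsSemisimpleRing.jacobson_eq_bot (R := Q)] at hle
  exact ((Ideal.quotEquivOfEq hker).symm.trans
    (RingHom.quotientKerEquivOfSurjective hp)).symm.isSemisimpleRing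

theorem IsSemilocalRing.isSemisimpleRing_quotient_jacobson (h : IsSemilocalRing R) :
    IsSemisimpleRing (R ⧸ Ring.jacobson R) := by
  rw [IsSemilocalRing, Ideal.jacobson_bot] at h
  exact (LinearMap.isSemisimpleModule_iff_of_bijective
    (σ := Ideal.Quotient.mk (Ring.jacobson R))
    { toFun := id, map_add' := fun _ _ ↦ rfl, map_smul' := fun _ _ ↦ rfl }
    Function.bijective_id).mp h

end Jacobson

section FinDim

variable {R M : Type*} [Ring R] [AddCommGroup M] [Module R M]

theorem IsFinDimModule.submodule (h : IsFinDimModule R M) (N : Submodule R M) :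
    IsFinDimModule R N := by
  intro ι P hP hne
  refine h ι (fun i ↦ (P i).map N.subtype)
    (LinearMap.iSupIndep_map N.subtype N.injective_subtype hP) fun i hi ↦ hne i ?_
  exact Submodule.map_injective_of_injective N.injective_subtype
    (hi.trans (Submodule.map_bot _).symm)

theorem IsFinDimModule.finite_of_sSupIndep (h : IsFinDimModule R M) {s : Set (Submodule R M)}
    (hs : sSupIndep s) (hbot : ⊥ ∉ s) : s.Finite := by
  by_contra hinf
  have : Infinite s := Set.infinite_coe_iff.mpr hinf
  let φ : ℕ ↪ s := Infinite.natEmbedding s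
  have : Finite ℕ := h ℕ _ (((sSupIndep_iff s).mp hs).comp φ.injective)
    fun i hi ↦ hbot (hi ▸ (φ i).2)
  exact not_finite ℕ

theorem IsFinDimModule.isNoetherian_of_isSemisimpleModule [IsSemisimpleModule R M]
    (h : IsFinDimModule R M) : IsNoetherian R M := by
  obtain ⟨s, hs, htop, hsimple⟩ := IsSemisimpleModule.exists_sSupIndep_sSup_simples_eq_top R M
  have hbot : ⊥ ∉ s := fun hb ↦ by
    have := hsimple ⊥ hb
    exact (isSimpleModule_iff_isAtom.mp this).1 rfl
  have : Finite s := h.finite_of_sSupIndep hs hbot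
  have (N : s) : IsNoetherian R (N : Submodule R M) := by
    have := hsimple N N.2
    infer_instance
  rw [← isNoetherian_top_iff, ← htop, sSup_eq_iSup']
  exact isNoetherian_iSup

theorem isSemisimpleModule_of_jacobson_smul_eq_bot [IsSemisimpleRing (R ⧸ Ring.jacobson R)]
    (h : Ring.jacobson R • (⊤ : Submodule R M) = ⊥) : IsSemisimpleModule R M := by
  have ht : Module.IsTorsionBySet R M (Ring.jacobson R) := fun m ⟨r, hr⟩ ↦ by
    have : r • m ∈ Ring.jacobson R • (⊤ : Submodule R M) := Submodule.smul_mem_smul hr trivial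
    simpa [h] using this
  let _ := ht.module
  exact ht.isSemisimpleModule_iff.mp inferInstance

theorem IsQFDModule.fg_map_mkQ_jacobson_smul [IsSemisimpleRing (R ⧸ Ring.jacobson R)]
    (h : IsQFDModule R M) (N : Submodule R M) : (N.map (Ring.jacobson R • N).mkQ).FG := by
  have hJ : Ring.jacobson R • (⊤ : Submodule R (N.map (Ring.jacobson R • N).mkQ)) = ⊥ := by
    apply Submodule.map_injective_of_injective (Submodule.injective_subtype _)
    rw [Submodule.map_smul'', Submodule.map_subtype_top, ← Submodule.map_smul'',
      Submodule.mkQ_map_self, Submodule.map_bot]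
  have := isSemisimpleModule_of_jacobson_smul_eq_bot hJ
  have := ((h (Ring.jacobson R • N)).submodule
    (N.map (Ring.jacobson R • N).mkQ)).isNoetherian_of_isSemisimpleModule
  exact Module.Finite.iff_fg.mp inferInstance

theorem IsQFDModule.exists_finset_span_le_sup_jacobson_smul
    [IsSemisimpleRing (R ⧸ Ring.jacobson R)] (h : IsQFDModule R M) {ι : Type*} (f : ι → M) :
    ∃ T : Finset ι, Submodule.span R (Set.range f) ≤
      Submodule.span R (f '' T) ⊔ Ring.jacobson R • Submodule.span R (Set.range f) := by
  classical
  set N := Submodule.span R (Set.range f)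
  set π := (Ring.jacobson R • N).mkQ with hπ
  have hfg : (Submodule.span R (π ∘ f '' Set.univ)).FG := by
    rw [Set.image_comp, Set.image_univ, ← Submodule.map_span]
    exact h.fg_map_mkQ_jacobson_smul N
  obtain ⟨t, ht, hspan⟩ := (Submodule.fg_span_iff_fg_span_finset_subset _).mp hfg
  obtain ⟨T, -, rfl⟩ := Finset.subset_set_image_iff.mp ht
  refine ⟨T, ?_⟩
  rw [Set.image_comp, Set.image_univ, Finset.coe_image, Set.image_comp, ← Submodule.map_span,
    ← Submodule.map_span] at hspan
  simpa only [hπ, Submodule.ker_mkQ] using (LinearMap.map_le_map_iff π).mp hspan.le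

theorem IsQFDModule.exists_mem_span_image_compl [IsSemisimpleRing (R ⧸ Ring.jacobson R)]
    (h : IsQFDModule R M) {ι : Type*} [Infinite ι] (f : ι → M) :
    ∃ j, f j ∈ Submodule.span R (f '' {j}ᶜ) := by
  obtain ⟨T, hT⟩ := h.exists_finset_span_le_sup_jacobson_smul f
  obtain ⟨j, hj⟩ := Infinite.exists_notMem_finset T
  refine ⟨j, (Submodule.span_singleton_le_iff_mem _ _).mp <|
    le_of_le_sup_jacobson_smul (Submodule.fg_span_singleton _) ?_⟩
  have hrange : Submodule.span R (Set.range f) =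
      Submodule.span R {f j} ⊔ Submodule.span R (f '' {j}ᶜ) := by
    rw [← Submodule.span_union, ← Set.image_singleton, ← Set.image_union, Set.union_compl_self,
      Set.image_univ]
  have hTj : Submodule.span R (f '' T) ≤ Submodule.span R (f '' {j}ᶜ) :=
    Submodule.span_mono (Set.image_mono fun k hk hkj ↦ hj (hkj ▸ hk))
  rw [hrange, Submodule.smul_sup] at hT
  exact (le_sup_left.trans hT).trans <| sup_le (hTj.trans le_sup_left) <|
    sup_le le_sup_right (Submodule.smul_le_right.trans le_sup_left)

theorem IsQFDModule.isNoetherian [IsSemiprimaryRing R] (h : IsQFDModule R M) :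
    IsNoetherian R M := by
  refine ⟨fun N ↦ ?_⟩
  obtain ⟨T, hT⟩ := h.exists_finset_span_le_sup_jacobson_smul (Subtype.val : N → M)
  have hspan : Submodule.span R (Set.range (Subtype.val : N → M)) = N := by
    rw [Subtype.range_coe, Submodule.span_eq]
  rw [hspan] at hT
  have hTN : Submodule.span R (Subtype.val '' (T : Set N)) ≤ N :=
    Submodule.span_le.mpr (Subtype.coe_image_subset (N : Set M) _)
  have hNT : N ≤ Submodule.span R (Subtype.val '' (T : Set N)) :=
    le_of_le_sup_smul_of_isNilpotent IsSemiprimaryRing.isNilpotent hT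
  rw [le_antisymm hNT hTN]
  exact Submodule.fg_span (T.finite_toSet.image _)

theorem IsQFDModule.of_semilinearEquiv {S M' : Type*} [Ring S] [AddCommGroup M'] [Module S M']
    {σ : R →+* S} {τ : S →+* R} [RingHomInvPair σ τ] [RingHomInvPair τ σ] (e : M ≃ₛₗ[σ] M')
    (h : IsQFDModule R M) : IsQFDModule S M' := by
  intro N ι K hK hne
  let E := Submodule.orderIsoMapComap
    (Submodule.Quotient.equiv N (N.map e.symm.toLinearMap) e.symm rfl)
  exact h _ ι (E ∘ K) ((iSupIndep_map_orderIso_iff E).mpr hK)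
    fun i hi ↦ hne i ((map_eq_bot_iff E).mp hi)

end FinDim

section Annihilator

theorem torsionOf_le_torsionOf_mul {A : Type*} [Ring A] (a b : A) :
    Ideal.torsionOf A A a ≤ Ideal.torsionOf A A (a * b) := fun c (hc : c * a = 0) ↦ by
  rw [Ideal.mem_torsionOf_iff, smul_eq_mul, ← mul_assoc, hc, zero_mul]

open Polynomial

theorem exists_isUnit_sub_algebraMap_of_isArtinianRing {K Q : Type*} [CommRing K] [Ring Q]
    [Algebra K Q] [IsArtinianRing Q] (a : Q) {t : ℕ → K}
    (ht : Pairwise fun i j ↦ IsUnit (algebraMap K Q (t i - t j))) :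
    ∃ n, IsUnit (a - algebraMap K Q (t n)) := by
  let p (m : ℕ) : K[X] := ∏ i ∈ Finset.range m, (X - C (t i))
  have hp (m : ℕ) : p (m + 1) = (X - C (t m)) * p m := Finset.prod_range_succ_comm _ _
  let ann : ℕ →o Ideal Q := ⟨fun m ↦ Ideal.torsionOf Q Q (aeval a (p m)),
    monotone_nat_of_le_succ fun m ↦ by
      rw [hp, mul_comm, map_mul]
      exact torsionOf_le_torsionOf_mul _ _⟩
  obtain ⟨m, hm⟩ := monotone_stabilizes_iff_noetherian.mpr (inferInstance : IsNoetherian Q Q) ann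
  refine ⟨m, IsArtinianRing.isUnit_iff_isRightRegular.mpr <|
    isRightRegular_of_non_zero_divisor _ fun q hq ↦ ?_⟩
  have hsub : aeval a (X - C (t m)) = a - algebraMap K Q (t m) := by simp
  have hann : q * aeval a (p m) = 0 := by
    have : q ∈ ann (m + 1) := by
      change q * aeval a (p (m + 1)) = 0
      rw [hp, map_mul, hsub, ← mul_assoc, hq, zero_mul]
    rwa [← hm (m + 1) m.le_succ] at this
  have heval : q * aeval a (p m) = q * algebraMap K Q ((p m).eval (t m)) := by
    obtain ⟨s, hs⟩ := X_sub_C_dvd_sub_C_eval (a := t m) (p := p m)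
    rw [← sub_eq_zero, ← mul_sub, ← aeval_C a, ← map_sub, hs, map_mul, hsub, ← mul_assoc, hq,
      zero_mul]
  have hunit : IsUnit (algebraMap K Q ((p m).eval (t m))) := by
    simp only [p, eval_prod, eval_sub, eval_X, eval_C]
    exact Finset.prod_induction _ (fun c ↦ IsUnit (algebraMap K Q c))
      (fun b c hb hc ↦ by simpa only [map_mul] using hb.mul hc) (by simp)
      fun i hi ↦ ht (Finset.mem_range.mp hi).ne'
  exact hunit.mul_left_eq_zero.mp (heval.symm.trans hann)

theorem exists_isUnit_sub_algebraMap {K R : Type*} [CommRing K] [Ring R] [Algebra K R]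
    [IsSemisimpleRing (R ⧸ Ring.jacobson R)] (a : R) {t : ℕ → K}
    (ht : Pairwise fun i j ↦ IsUnit (algebraMap K R (t i - t j))) :
    ∃ n, IsUnit (a - algebraMap K R (t n)) := by
  obtain ⟨n, hn⟩ := exists_isUnit_sub_algebraMap_of_isArtinianRing
    (Ideal.Quotient.mk (Ring.jacobson R) a) (t := t)
    (fun i j hij ↦ (ht hij).map (Ideal.Quotient.mk (Ring.jacobson R)))
  exact ⟨n, (isUnit_map_iff (Ideal.Quotient.mk (Ring.jacobson R)) _).mp hn⟩

end Annihilator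

section Levitzki

variable {A : Type*} [Ring A]

theorem exists_ne_zero_forall_mul_mul_eq_zero [IsNoetherianRing A] {L : Ideal A} [L.IsTwoSided]
    (hL : ∀ a ∈ L, IsNilpotent a) (h0 : L ≠ ⊥) :
    ∃ a ∈ L, a ≠ 0 ∧ ∀ x, a * x * a = 0 := by
  obtain ⟨b, hbL, hb⟩ := L.ne_bot_iff.mp h0
  obtain ⟨_, ⟨a, ⟨haL, ha⟩, rfl⟩, hmax⟩ := set_has_maximal_iff_noetherian.mpr
    (inferInstance : IsNoetherian A A) (Ideal.torsionOf A A '' {a | a ∈ L ∧ a ≠ 0})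
    ⟨_, b, ⟨hbL, hb⟩, rfl⟩
  refine ⟨a, haL, ha, fun x ↦ ?_⟩
  have : Nontrivial A := ⟨a, 0, ha⟩
  have hnil : IsNilpotent (a * x) := hL _ (L.mul_mem_right x haL)
  obtain ⟨k, hk⟩ := Nat.exists_eq_add_one.mpr (pos_nilpotencyClass_iff.mpr hnil)
  obtain ⟨hk0, hk⟩ := nilpotencyClass_eq_succ_iff.mp hk
  cases k with
  | zero => rw [show a * x = 0 by simpa using hk0, zero_mul]
  | succ k =>
    have hpow : (a * x) ^ (k + 1) = a * (x * (a * x) ^ k) := by rw [pow_succ', mul_assoc]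
    have hle : Ideal.torsionOf A A a ≤ Ideal.torsionOf A A ((a * x) ^ (k + 1)) :=
      hpow ▸ torsionOf_le_torsionOf_mul a _
    have hmem : (a * x) ^ (k + 1) ∈ L := hpow ▸ L.mul_mem_right _ haL
    have heq := eq_of_le_of_not_lt hle (hmax _ ⟨_, ⟨hmem, hk⟩, rfl⟩)
    rwa [← smul_eq_mul, ← Ideal.mem_torsionOf_iff, heq, Ideal.mem_torsionOf_iff, smul_eq_mul,
      ← pow_succ']

theorem span_singleton_mul_top_mul_self_eq_bot {a : A} (ha : ∀ x, a * x * a = 0) :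
    (Ideal.span {a} * ⊤ : Ideal A) * (Ideal.span {a} * ⊤) = ⊥ := by
  have hsq : Ideal.span {a} * Ideal.span {a} = ⊥ := by
    rw [eq_bot_iff, Ideal.mul_le]
    intro r hr s hs
    obtain ⟨x, rfl⟩ := Ideal.mem_span_singleton'.mp hr
    obtain ⟨y, rfl⟩ := Ideal.mem_span_singleton'.mp hs
    rw [Submodule.mem_bot, mul_assoc, ← mul_assoc a, ha, mul_zero]
  rw [eq_bot_iff]
  calc (Ideal.span {a} * ⊤ : Ideal A) * (Ideal.span {a} * ⊤)
      = Ideal.span {a} * (⊤ * Ideal.span {a}) * ⊤ := by simp only [mul_assoc]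
    _ ≤ Ideal.span {a} * Ideal.span {a} * ⊤ :=
        Ideal.mul_mono_left (Ideal.mul_mono_right Ideal.mul_le_right)
    _ = ⊥ := by rw [hsq, Submodule.bot_mul]

theorem isNilpotent_of_pow_le {I P : Ideal A} [I.IsTwoSided] (hP : IsNilpotent P) {n : ℕ}
    (h : I ^ n ≤ P) : IsNilpotent I := by
  obtain ⟨m, hm⟩ := hP
  have hpow (k : ℕ) : I ^ (n * k) ≤ P ^ k := by
    induction k with
    | zero => simp only [mul_zero, Submodule.pow_zero, le_refl]
    | succ k ih =>
      rw [Nat.mul_succ, Ideal.IsTwoSided.pow_add, Submodule.pow_succ]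
      exact Ideal.mul_mono ih h
  exact ⟨n * m, le_bot_iff.mp ((hpow m).trans_eq hm)⟩

theorem isNilpotent_of_forall_mem_isNilpotent [IsNoetherianRing A] {L : Ideal A} [L.IsTwoSided]
    (hL : ∀ a ∈ L, IsNilpotent a) : IsNilpotent L := by
  obtain ⟨P, ⟨hPtwo, hP⟩, hmax⟩ := set_has_maximal_iff_noetherian.mpr
    (inferInstance : IsNoetherian A A) {P : Ideal A | P.IsTwoSided ∧ IsNilpotent P}
    ⟨⊥, inferInstance, 1, Submodule.pow_one ⊥⟩
  suffices L ≤ P from isNilpotent_of_pow_le hP (n := 1) (by rwa [Submodule.pow_one])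
  let π := Ideal.Quotient.mk P
  have : IsNoetherianRing (A ⧸ P) :=
    isNoetherianRing_of_surjective A (A ⧸ P) π Ideal.Quotient.mk_surjective
  have hnil : ∀ b ∈ L.map π, IsNilpotent b := fun b hb ↦ by
    obtain ⟨a, ha, rfl⟩ := (Ideal.mem_map_iff_of_surjective π Ideal.Quotient.mk_surjective).mp hb
    exact (hL a ha).map π
  by_contra hLP
  have hne : L.map π ≠ ⊥ := fun h ↦ hLP (by rwa [Ideal.map_eq_bot_iff_le_ker, Ideal.mk_ker] at h)
  obtain ⟨b, -, hb, hbb⟩ := exists_ne_zero_forall_mul_mul_eq_zero hnil hne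
  let N : Ideal A := (Ideal.span {b} * ⊤).comap π
  have hsq : N ^ 2 ≤ P := by
    rw [Submodule.pow_succ, Submodule.pow_one, Ideal.mul_le]
    intro x hx y hy
    have := Ideal.mul_mem_mul (Ideal.mem_comap.mp hx) (Ideal.mem_comap.mp hy)
    rw [span_singleton_mul_top_mul_self_eq_bot hbb, Submodule.mem_bot, ← map_mul] at this
    exact Ideal.Quotient.eq_zero_iff_mem.mp this
  obtain ⟨a, rfl⟩ := Ideal.Quotient.mk_surjective b
  refine hmax N ⟨inferInstance, isNilpotent_of_pow_le hP hsq⟩ (lt_of_le_of_ne ?_ fun heq ↦ ?_)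
  · exact fun x hx ↦ by simp [N, π, Ideal.Quotient.eq_zero_iff_mem.mpr hx]
  · have haN : a ∈ N := by
      have := Ideal.mul_mem_mul (Ideal.mem_span_singleton_self (π a)) (Submodule.mem_top (x := 1))
      rwa [mul_one] at this
    exact hb (Ideal.Quotient.eq_zero_iff_mem.mpr (heq ▸ haN))

end Levitzki

section HahnSeries

theorem coeff_mul_mem {Γ R : Type*} [AddCommMonoid Γ] [PartialOrder Γ] [IsOrderedCancelAddMonoid Γ]
    [NonUnitalNonAssocSemiring R] (I : AddSubmonoid R) {f g : HahnSeries Γ R} {n : Γ}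
    (h : ∀ i j, i + j = n → f.coeff i ≠ 0 → g.coeff j ≠ 0 → f.coeff i * g.coeff j ∈ I) :
    (f * g).coeff n ∈ I := by
  rw [HahnSeries.coeff_mul]
  refine I.sum_mem fun p hp ↦ ?_
  obtain ⟨hf, hg, hn⟩ := Finset.mem_antidiagonal.mp hp
  exact h _ _ hn hf hg

theorem commute_single_one {Γ R : Type*} [AddCommGroup Γ] [PartialOrder Γ] [IsOrderedAddMonoid Γ]
    [NonAssocSemiring R] (n : Γ) (f : HahnSeries Γ R) : Commute (HahnSeries.single n 1) f := by
  ext i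
  rw [HahnSeries.coeff_single_mul, HahnSeries.coeff_mul_single, one_mul, mul_one]

end HahnSeries

section Laurent

open HahnSeries Filter

variable {A : Type*} [Ring A]

theorem isUnit_of_isUnit_leadingCoeff {f : LaurentSeries A} (hf : IsUnit f.leadingCoeff) :
    IsUnit f := by
  obtain ⟨u, hu⟩ := hf
  have hpart : IsUnit f.powerSeriesPart := by
    have hc : PowerSeries.constantCoeff f.powerSeriesPart = (u : A) := by
      rw [hu, leadingCoeff_eq, ← PowerSeries.coeff_zero_eq_constantCoeff_apply,
        LaurentSeries.powerSeriesPart_coeff, Nat.cast_zero, add_zero]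
    exact isUnit_iff_exists.mpr
      ⟨_, PowerSeries.mul_invOfUnit _ u hc, PowerSeries.invOfUnit_mul _ u hc⟩
  have hsingle : IsUnit (single f.order 1 : LaurentSeries A) :=
    isUnit_iff_exists.mpr ⟨single (-f.order) 1, by simp, by simp⟩
  rw [← f.single_order_mul_powerSeriesPart]
  exact hsingle.mul (hpart.map (ofPowerSeries ℤ A))

theorem isUnit_of_isUnit_coeff {f : LaurentSeries A} {n : ℤ} (hlt : ∀ i < n, f.coeff i = 0)
    (hn : IsUnit (f.coeff n)) : IsUnit f := by
  nontriviality A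
  have hf : f ≠ 0 := fun h ↦ hn.ne_zero (by simp [h])
  have horder : f.order = n :=
    le_antisymm (order_le_of_coeff_ne_zero hn.ne_zero)
      ((le_order_iff_forall hf).mpr hlt)
  exact isUnit_of_isUnit_leadingCoeff (by rwa [leadingCoeff_eq, horder])

theorem isUnit_single_one_sub_single_one {m n : ℤ} (h : m ≠ n) :
    IsUnit (single m 1 - single n 1 : LaurentSeries A) := by
  wlog hmn : m < n generalizing m n
  · rw [← neg_sub, IsUnit.neg_iff]
    exact this h.symm (h.lt_or_gt.resolve_left hmn)
  refine isUnit_of_isUnit_coeff (n := m) (fun i hi ↦ ?_) ?_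
  · rw [coeff_sub, coeff_single_of_ne hi.ne, coeff_single_of_ne (hi.trans hmn).ne, sub_zero]
  · rw [coeff_sub, coeff_single_same, coeff_single_of_ne h, sub_zero]
    exact isUnit_one

/-- The left ideal of `A((x))` of all series with coefficients in the left ideal `P` of `A`. -/
def laurentIdeal (P : Ideal A) : Ideal (LaurentSeries A) where
  carrier := {f | ∀ i, f.coeff i ∈ P}
  add_mem' hf hg i := P.add_mem (hf i) (hg i)
  zero_mem' _ := P.zero_mem
  smul_mem' _ _ hf _ := coeff_mul_mem P.toAddSubmonoid fun _ j _ _ _ ↦ P.mul_mem_left _ (hf j)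

theorem mem_laurentIdeal {P : Ideal A} {f : LaurentSeries A} :
    f ∈ laurentIdeal P ↔ ∀ i, f.coeff i ∈ P :=
  Iff.rfl

theorem laurentIdeal_bot : laurentIdeal (⊥ : Ideal A) = ⊥ :=
  eq_bot_iff.mpr fun f hf ↦ by
    ext i
    exact hf i

theorem laurentIdeal_mul_le (P Q : Ideal A) :
    laurentIdeal P * laurentIdeal Q ≤ laurentIdeal (P * Q) :=
  Ideal.mul_le.mpr fun _ hf _ hg _ ↦ coeff_mul_mem (P * Q).toAddSubmonoid
    fun i j _ _ _ ↦ Ideal.mul_mem_mul (hf i) (hg j)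

theorem laurentIdeal_pow_le (P : Ideal A) (n : ℕ) : laurentIdeal P ^ n ≤ laurentIdeal (P ^ n) := by
  induction n with
  | zero =>
    intro f _ i
    simp only [Submodule.pow_zero, Ideal.one_eq_top, Submodule.mem_top]
  | succ n ih =>
    rw [Submodule.pow_succ, Submodule.pow_succ]
    exact (Ideal.mul_mono ih le_rfl).trans (laurentIdeal_mul_le _ _)

theorem isNilpotent_laurentIdeal {P : Ideal A} (hP : IsNilpotent P) :
    IsNilpotent (laurentIdeal P) := by
  obtain ⟨n, hn⟩ := hP
  exact ⟨n, le_bot_iff.mp ((laurentIdeal_pow_le P n).trans_eq (by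
    rw [hn, Submodule.zero_eq_bot, laurentIdeal_bot]))⟩

theorem C_mem_laurentIdeal {P : Ideal A} {a : A} : C a ∈ laurentIdeal P ↔ a ∈ P := by
  refine ⟨fun h ↦ by simpa using h 0, fun h i ↦ ?_⟩
  rw [C_apply, coeff_single]
  split_ifs
  exacts [h, P.zero_mem]

theorem laurentIdeal_strictMono :
    StrictMono (laurentIdeal : Ideal A → Ideal (LaurentSeries A)) := fun P Q h ↦ by
  refine lt_of_le_not_ge (fun f hf i ↦ h.le (hf i)) fun hle ↦ h.not_ge fun a ha ↦ ?_
  exact C_mem_laurentIdeal.mp (hle (C_mem_laurentIdeal.mpr ha))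

theorem isArtinianRing_of_isArtinianRing_laurentSeries [IsArtinianRing (LaurentSeries A)] :
    IsArtinianRing A :=
  laurentIdeal_strictMono.wellFoundedLT

/-- The left ideal of `A` formed by `0` and the leading coefficients of the elements of `I`,
encoded as the constant coefficients of those elements of `I` that have no negative part. -/
def leadingCoeffIdeal (I : Ideal (LaurentSeries A)) : Ideal A where
  carrier := {a | ∃ f ∈ I, (∀ i < 0, f.coeff i = 0) ∧ f.coeff 0 = a}
  add_mem' := by
    rintro _ _ ⟨f, hf, hf0, rfl⟩ ⟨g, hg, hg0, rfl⟩
    exact ⟨f + g, I.add_mem hf hg, fun i hi ↦ by rw [coeff_add, hf0 i hi, hg0 i hi, add_zero],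
      coeff_add⟩
  zero_mem' := ⟨0, I.zero_mem, fun _ _ ↦ rfl, rfl⟩
  smul_mem' := by
    rintro a _ ⟨f, hf, hf0, rfl⟩
    exact ⟨C a * f, I.mul_mem_left _ hf,
      fun i hi ↦ by rw [C_apply, coeff_single_zero_mul, hf0 i hi, mul_zero],
      coeff_single_zero_mul⟩

instance isTwoSided_leadingCoeffIdeal (I : Ideal (LaurentSeries A)) [I.IsTwoSided] :
    (leadingCoeffIdeal I).IsTwoSided where
  mul_mem_of_left := by
    rintro _ a ⟨f, hf, hf0, rfl⟩
    exact ⟨f * C a, I.mul_mem_right _ hf,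
      fun i hi ↦ by rw [C_apply, coeff_mul_single_zero, hf0 i hi, zero_mul],
      coeff_mul_single_zero⟩

theorem coeff_mem_leadingCoeffIdeal {I : Ideal (LaurentSeries A)} {f : LaurentSeries A}
    (hf : f ∈ I) {n : ℤ} (hn : ∀ i < n, f.coeff i = 0) : f.coeff n ∈ leadingCoeffIdeal I := by
  refine ⟨single (-n) 1 * f, I.mul_mem_left _ hf, fun i hi ↦ ?_, ?_⟩
  · rw [coeff_single_mul, one_mul, hn _ (by lia)]
  · rw [coeff_single_mul, one_mul, zero_sub, neg_neg]

theorem le_laurentIdeal {I : Ideal (LaurentSeries A)} {P : Ideal A} (hP : laurentIdeal P ≤ I)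
    (hI : leadingCoeffIdeal I ≤ P) : I ≤ laurentIdeal P := by
  intro f hf
  by_contra hfP
  have hne : {i | f.coeff i ∉ P}.Nonempty := by simpa [mem_laurentIdeal, Set.Nonempty] using hfP
  have hwf : {i | f.coeff i ∉ P}.IsWF :=
    f.isWF_support.mono fun i hi h0 ↦ hi (h0 ▸ P.zero_mem)
  set n := hwf.min hne
  have htrunc : truncLT n f ∈ laurentIdeal P := fun i ↦ by
    rw [HahnSeries.coeff_truncLT]
    split_ifs with hi
    · exact not_not.mp fun h ↦ hwf.not_lt_min hne h hi
    · exact P.zero_mem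
  have hmem : (f - truncLT n f).coeff n ∈ leadingCoeffIdeal I :=
    coeff_mem_leadingCoeffIdeal (I.sub_mem hf (hP htrunc)) fun i hi ↦ by
      rw [coeff_sub, coeff_truncLT_of_lt hi, sub_self]
  rw [coeff_sub, coeff_truncLT_of_le le_rfl, sub_zero] at hmem
  exact hwf.min_mem hne (hI hmem)

/-- The Laurent series `∑ₙ aₙ x ^ (n ^ 2)`. -/
noncomputable def sparseSeries (a : ℕ → A) : LaurentSeries A :=
  embDomain (OrderEmbedding.ofStrictMono (fun n : ℕ ↦ (n : ℤ) ^ 2)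
    fun m n h ↦ by dsimp only; gcongr) (toPowerSeries.symm (PowerSeries.mk a))

theorem coeff_sparseSeries_sq (a : ℕ → A) (n : ℕ) :
    (sparseSeries a).coeff ((n : ℤ) ^ 2) = a n := by
  refine embDomain_coeff.trans ?_
  rw [coeff_toPowerSeries_symm, PowerSeries.coeff_mk]

theorem exists_eq_sq_of_coeff_sparseSeries_ne_zero {a : ℕ → A} {i : ℤ}
    (h : (sparseSeries a).coeff i ≠ 0) : ∃ n : ℕ, i = (n : ℤ) ^ 2 := by
  by_contra! hi
  exact h (embDomain_of_notMem_range fun ⟨n, hn⟩ ↦ hi n hn.symm)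

theorem eventually_coeff_mul_sparseSeries_mem {I : ℕ → Ideal A} (hI : Monotone I) {a : ℕ → A}
    (ha : ∀ n, a n ∈ I (n + 1)) (r : LaurentSeries A) :
    ∀ᶠ n : ℕ in atTop, a n = 0 → (r * sparseSeries a).coeff ((n : ℤ) ^ 2) ∈ I n := by
  filter_upwards [eventually_ge_atTop (-r.order).toNat] with n hn han
  refine coeff_mul_mem (I n).toAddSubmonoid fun i j hij hi hj ↦ (I n).mul_mem_left _ ?_
  obtain ⟨m, rfl⟩ := exists_eq_sq_of_coeff_sparseSeries_ne_zero hj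
  rw [coeff_sparseSeries_sq] at hj ⊢
  have hmn : m < n := by
    refine lt_of_le_of_ne (not_lt.mp fun hlt ↦ ?_) fun h ↦ hj (h ▸ han)
    -- The next square exceeds `n ^ 2` by more than the pole order of `r`.
    have hsq : ((n : ℤ) + 1) ^ 2 ≤ (m : ℤ) ^ 2 := by gcongr; exact_mod_cast hlt
    have := order_le_of_coeff_ne_zero hi
    lia
  exact hI hmn (ha m)

theorem eventually_coeff_mul_mem_of_mem_span {ι : Type*} {l : Filter ι} {e : ι → ℤ}
    {I : ι → Ideal A} {s : Set (LaurentSeries A)}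
    (hs : ∀ f ∈ s, ∀ r : LaurentSeries A, ∀ᶠ n in l, (r * f).coeff (e n) ∈ I n)
    {g : LaurentSeries A} (hg : g ∈ Ideal.span s) (r : LaurentSeries A) :
    ∀ᶠ n in l, (r * g).coeff (e n) ∈ I n := by
  induction hg using Submodule.span_induction generalizing r with
  | mem f hf => exact hs f hf r
  | zero => exact .of_forall fun n ↦ by rw [mul_zero]; exact (I n).zero_mem
  | add f g _ _ hf hg =>
    filter_upwards [hf r, hg r] with n hfn hgn
    rw [mul_add]
    exact (I n).add_mem hfn hgn
  | smul s f _ hf => simpa only [smul_eq_mul, mul_assoc] using hf (r * s)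

theorem exists_pow_eq_pow_succ_mul_of_isUnit {a : A} {n : ℕ}
    (h : IsUnit (C a - single ((n + 1 : ℕ) : ℤ) 1 : LaurentSeries A)) :
    ∃ (k : ℕ) (b : A), a ^ k = a ^ (k + 1) * b := by
  obtain ⟨g, hg⟩ := h.exists_right_inv
  have hrec (i : ℤ) :
      a * g.coeff i - g.coeff (i - (n + 1 : ℕ)) = (1 : LaurentSeries A).coeff i := by
    rw [← hg, sub_mul, coeff_sub, C_apply, coeff_single_zero_mul, coeff_single_mul, one_mul]
  have hneg (k : ℕ) : g.coeff (-((k + 1) * (n + 1) : ℕ)) = a ^ k * g.coeff (-(n + 1 : ℕ)) := by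
    induction k with
    | zero => simp
    | succ k ih =>
      have hi : (-((k + 1) * (n + 1) : ℕ) : ℤ) ≠ 0 := neg_ne_zero.mpr (by positivity)
      have := hrec (-((k + 1) * (n + 1) : ℕ))
      rw [coeff_one, if_neg hi, sub_eq_zero, ih, ← mul_assoc, ← pow_succ'] at this
      rw [this]
      congr 1
      push_cast
      ring
  let k := (-g.order).toNat
  have hk : a ^ k * g.coeff (-(n + 1 : ℕ)) = 0 := by
    rw [← hneg]
    refine coeff_eq_zero_of_lt_order ?_
    have : k + 1 ≤ (k + 1) * (n + 1) := Nat.le_mul_of_pos_right _ n.succ_pos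
    lia
  have h0 : a * g.coeff 0 - g.coeff (-(n + 1 : ℕ)) = 1 := by simpa using hrec 0
  exact ⟨k, g.coeff 0, by
    rw [pow_succ, mul_assoc, sub_eq_iff_eq_add.mp h0, mul_add, mul_one, hk, add_zero]⟩

variable [IsSemisimpleRing (LaurentSeries A ⧸ Ring.jacobson (LaurentSeries A))]

theorem IsQFDModule.not_strictMono_ideal (h : IsQFDModule (LaurentSeries A) (LaurentSeries A))
    (I : ℕ → Ideal A) : ¬ StrictMono I := by
  intro hI
  choose a ha hna using fun n ↦ SetLike.exists_of_lt (hI (Nat.lt_succ_self n))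
  -- The fibres of `n ↦ (Nat.unpair n).1` partition `ℕ` into infinitely many infinite sets.
  let S (j : ℕ) : Set ℕ := {n | n.unpair.1 = j}
  let f (j : ℕ) : LaurentSeries A := sparseSeries ((S j).indicator a)
  obtain ⟨j, hj⟩ := h.exists_mem_span_image_compl f
  have hS : ∃ᶠ n in atTop, n ∈ S j :=
    frequently_atTop.mpr fun N ↦ ⟨j.pair N, j.right_le_pair N, by simp [S]⟩
  have hf : ∀ g ∈ f '' {j}ᶜ, ∀ r : LaurentSeries A,
      ∀ᶠ n in atTop ⊓ 𝓟 (S j), (r * g).coeff ((n : ℤ) ^ 2) ∈ I n := by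
    rintro _ ⟨k, hk, rfl⟩ r
    have hmem (n : ℕ) : (S k).indicator a n ∈ I (n + 1) := by
      by_cases hn : n ∈ S k <;> simp [hn, ha]
    rw [eventually_inf_principal]
    filter_upwards [eventually_coeff_mul_sparseSeries_mem hI.monotone hmem r] with n hn hnj
    exact hn (Set.indicator_of_notMem (fun hnk ↦ hk (hnk.symm.trans hnj)) a)
  have hev := eventually_coeff_mul_mem_of_mem_span hf hj 1
  rw [eventually_inf_principal] at hev
  obtain ⟨n, hnS, hn⟩ := (hS.and_eventually hev).exists
  have := hn hnS
  rw [one_mul, coeff_sparseSeries_sq, Set.indicator_of_mem hnS] at this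
  exact hna n this

theorem IsQFDModule.isNoetherianRing_coeff
    (h : IsQFDModule (LaurentSeries A) (LaurentSeries A)) : IsNoetherianRing A := by
  rw [IsNoetherianRing, isNoetherian_iff', WellFoundedGT, isWellFounded_iff,
    RelEmbedding.wellFounded_iff_isEmpty]
  exact ⟨fun e ↦ h.not_strictMono_ideal e fun _ _ hmn ↦ e.map_rel_iff.mpr hmn⟩

theorem exists_isUnit_C_sub_single_one (a : A) :
    ∃ n : ℕ, IsUnit (C a - single ((n + 1 : ℕ) : ℤ) 1 : LaurentSeries A) := by
  let t (n : ℕ) : Subring.center (LaurentSeries A) :=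
    ⟨single ((n + 1 : ℕ) : ℤ) 1,
      Subring.mem_center_iff.mpr fun f ↦ (commute_single_one _ f).symm⟩
  exact exists_isUnit_sub_algebraMap (C a) (t := t) fun i j hij ↦
    isUnit_single_one_sub_single_one (by simpa using hij)

theorem isNilpotent_of_mem_leadingCoeffIdeal_jacobson {a : A}
    (ha : a ∈ leadingCoeffIdeal (Ring.jacobson (LaurentSeries A))) : IsNilpotent a := by
  obtain ⟨n, hn⟩ := exists_isUnit_C_sub_single_one a
  obtain ⟨k, b, hkb⟩ := exists_pow_eq_pow_succ_mul_of_isUnit hn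
  obtain ⟨F, hF, hF0, hFab⟩ := Ideal.mul_mem_right b _ ha
  have hunit : IsUnit (1 - C (a * b) + F) := by
    refine isUnit_of_isUnit_coeff (n := 0) (fun i hi ↦ ?_) ?_
    · simp [coeff_one, coeff_single_of_ne hi.ne, hi.ne, hF0 i hi]
    · simp [hFab]
  have hunit' : IsUnit (1 - C (a * b) : LaurentSeries A) := by
    refine isUnit_of_map_unit (Ideal.Quotient.mk (Ring.jacobson (LaurentSeries A))) _ ?_
    have := hunit.map (Ideal.Quotient.mk (Ring.jacobson (LaurentSeries A)))
    rwa [map_add, Ideal.Quotient.eq_zero_iff_mem.mpr hF, add_zero] at this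
  have hzero : (C (a ^ k) : LaurentSeries A) * (1 - C (a * b)) = 0 := by
    rw [mul_sub, mul_one, ← map_mul, ← mul_assoc, ← pow_succ, ← hkb, sub_self]
  exact ⟨k, C_injective ((hunit'.mul_left_eq_zero.mp hzero).trans (map_zero C).symm)⟩

theorem IsQFDModule.isNilpotent_jacobson_laurentSeries
    (h : IsQFDModule (LaurentSeries A) (LaurentSeries A)) :
    IsNilpotent (Ring.jacobson (LaurentSeries A)) := by
  have := h.isNoetherianRing_coeff
  have hlead : IsNilpotent (leadingCoeffIdeal (Ring.jacobson (LaurentSeries A))) :=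
    isNilpotent_of_forall_mem_isNilpotent fun _ ↦ isNilpotent_of_mem_leadingCoeffIdeal_jacobson
  have hnil := isNilpotent_laurentIdeal hlead
  have hle := le_jacobson_of_isNilpotent hnil
  rwa [le_antisymm (le_laurentIdeal hle le_rfl) hle]

theorem IsQFDModule.isArtinianRing_laurentSeries
    (h : IsQFDModule (LaurentSeries A) (LaurentSeries A)) : IsArtinianRing (LaurentSeries A) := by
  have : IsSemiprimaryRing (LaurentSeries A) :=
    ⟨inferInstance, h.isNilpotent_jacobson_laurentSeries⟩
  exact (IsSemiprimaryRing.isNoetherian_iff_isArtinian).mp h.isNoetherian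

end Laurent

section Opposite

open MulOpposite

theorem isArtinian_of_isArtinianRing_op {R : Type*} [Ring R] [IsArtinianRing Rᵐᵒᵖ] :
    IsArtinian Rᵐᵒᵖ R :=
  isArtinian_of_linearEquiv (M := Rᵐᵒᵖ)
    { (opAddEquiv : R ≃+ Rᵐᵒᵖ).symm with map_smul' := fun _ _ ↦ rfl }

theorem IsQFDModule.of_ringEquiv {R S : Type*} [Ring R] [Ring S] (e : R ≃+* S)
    (h : IsQFDModule R R) : IsQFDModule S S := by
  have : RingHomInvPair (RingHomClass.toRingHom e) (RingHomClass.toRingHom e.symm) :=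
    ⟨by ext; simp, by ext; simp⟩
  have := this.symm
  exact h.of_semilinearEquiv e.toSemilinearEquiv

instance isLocalHom_op {R S : Type*} [Semiring R] [Semiring S] (f : R →+* S) [IsLocalHom f] :
    IsLocalHom (RingHom.op f) where
  map_nonunit _ hr := isUnit_unop.mp (isUnit_of_map_unit f _ (isUnit_unop.mpr hr))

theorem map_opAddEquiv_mul {Γ R : Type*} [AddCommMonoid Γ] [PartialOrder Γ]
    [IsOrderedCancelAddMonoid Γ] [NonUnitalNonAssocSemiring R] (f g : HahnSeries Γ R) :
    (f * g).map (opAddEquiv : R ≃+ Rᵐᵒᵖ) =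
      g.map (opAddEquiv : R ≃+ Rᵐᵒᵖ) * f.map (opAddEquiv : R ≃+ Rᵐᵒᵖ) := by
  ext n
  rw [HahnSeries.map_coeff, HahnSeries.coeff_mul, HahnSeries.coeff_mul, map_sum]
  refine Finset.sum_nbij' Prod.swap Prod.swap ?_ ?_ ?_ ?_ ?_ <;>
    simp +contextual [add_comm]

variable {A : Type*} [Ring A]

/-- Reading coefficients in the opposite ring identifies the opposite of a Laurent series ring
with a Laurent series ring; it exchanges right modules over `A((x))` with left modules over
`Aᵐᵒᵖ((x))`. -/
noncomputable def laurentSeriesOpEquiv (A : Type*) [Ring A] :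
    (LaurentSeries A)ᵐᵒᵖ ≃+* LaurentSeries Aᵐᵒᵖ where
  toFun f := f.unop.map (opAddEquiv : A ≃+ Aᵐᵒᵖ)
  invFun f := op (f.map (opAddEquiv : A ≃+ Aᵐᵒᵖ).symm)
  left_inv f := unop_injective (by ext i; simp)
  right_inv f := by ext i; simp
  map_add' f g := by ext i; simp
  map_mul' f g := map_opAddEquiv_mul g.unop f.unop

theorem isSemisimpleRing_quotient_jacobson_laurentSeries_op
    [IsSemisimpleRing (LaurentSeries A ⧸ Ring.jacobson (LaurentSeries A))] :
    IsSemisimpleRing (LaurentSeries Aᵐᵒᵖ ⧸ Ring.jacobson (LaurentSeries Aᵐᵒᵖ)) := by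
  let π := RingHom.op (Ideal.Quotient.mk (Ring.jacobson (LaurentSeries A)))
  have hπ : Function.Surjective π := fun q ↦ by
    obtain ⟨r, hr⟩ := Ideal.Quotient.mk_surjective q.unop
    exact ⟨op r, unop_injective hr⟩
  let e : LaurentSeries Aᵐᵒᵖ →+* (LaurentSeries A)ᵐᵒᵖ := (laurentSeriesOpEquiv A).symm
  have : IsLocalHom e := inferInstance
  exact isSemisimpleRing_quotient_jacobson_of_surjective (π.comp e)
    (hπ.comp (laurentSeriesOpEquiv A).symm.surjective)

end Opposite

/-- Let `R = A((x))` be the Laurent series ring over `A`. If `R` is a semilocal ring and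
every cyclic right `R`-module is quotient finite-dimensional, then both `R` and `A` are
right Artinian rings. -/
theorem stmt11 (A : Type u) [Ring A]
    (hsl : IsSemilocalRing (LaurentSeries A))
    (h : ∀ (M : Type u) [AddCommGroup M] [Module (LaurentSeries A)ᵐᵒᵖ M],
      (∃ m : M, Submodule.span (LaurentSeries A)ᵐᵒᵖ {m} = ⊤) →
        IsQFDModule (LaurentSeries A)ᵐᵒᵖ M) :
    IsArtinian (LaurentSeries A)ᵐᵒᵖ (LaurentSeries A) ∧ IsArtinian Aᵐᵒᵖ A := by
  have := hsl.isSemisimpleRing_quotient_jacobson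
  have := isSemisimpleRing_quotient_jacobson_laurentSeries_op (A := A)
  have hqfd : IsQFDModule (LaurentSeries Aᵐᵒᵖ) (LaurentSeries Aᵐᵒᵖ) :=
    (h _ ⟨1, Ideal.span_singleton_one⟩).of_ringEquiv (laurentSeriesOpEquiv A)
  have : IsArtinianRing (LaurentSeries Aᵐᵒᵖ) := hqfd.isArtinianRing_laurentSeries
  have : IsArtinianRing (LaurentSeries A)ᵐᵒᵖ := (laurentSeriesOpEquiv A).symm.isArtinianRing
  have : IsArtinianRing Aᵐᵒᵖ := isArtinianRing_of_isArtinianRing_laurentSeries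
  exact ⟨isArtinian_of_isArtinianRing_op, isArtinian_of_isArtinianRing_op⟩
end
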